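/- For any matrix G ∈ ℝ^{n₁×n₂} and any τ ∈ [1, n₁], sup{⟨G, X⟩ : X ∈ ℝ^{n₁×n₂}, ‖X‖_F = 1, ‖X‖_*² ≤ τ} ≤ √τ · ‖G‖₂; consequently, if the entries of G are i.i.d. N(0,1), then E[sup{⟨G, X⟩ : ‖X‖_F = 1, ‖X‖_*² ≤ τ}] ≤ √τ · E‖G‖₂ ≤ 2√τ·√n₂. -/

import Mathlib

open scoped BigOperators

noncomputable section

/-- Frobenius norm of a real matrix. -/
def frobNorm {n₁ n₂ : ℕ} (X : Matrix (Fin n₁) (Fin n₂) ℝ) : ℝ :=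
  Real.sqrt (∑ i, ∑ j, (X i j) ^ 2)

/-- Singular values of a real matrix: square roots of eigenvalues of `X * Xᴴ`. -/
def singVals {n₁ n₂ : ℕ} (X : Matrix (Fin n₁) (Fin n₂) ℝ) : Fin n₁ → ℝ :=
  fun i => Real.sqrt ((Matrix.isHermitian_mul_conjTranspose_self X).eigenvalues i)

/-- Nuclear norm: sum of singular values. -/
def nuclearNorm {n₁ n₂ : ℕ} (X : Matrix (Fin n₁) (Fin n₂) ℝ) : ℝ :=
  ∑ i, singVals X i

/-- Operator norm: largest singular value. -/
def matOpNorm {n₁ n₂ : ℕ} (X : Matrix (Fin n₁) (Fin n₂) ℝ) : ℝ :=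
  ⨆ i, singVals X i

/-- ℓ*-rank. -/
def lstarRank {n₁ n₂ : ℕ} (X : Matrix (Fin n₁) (Fin n₂) ℝ) : ℝ :=
  nuclearNorm X ^ 2 / frobNorm X ^ 2

/-- Euclidean norm of a vector. -/
def vnorm {m : ℕ} (v : Fin m → ℝ) : ℝ :=
  Real.sqrt (∑ k, (v k) ^ 2)

/-- Matrix inner product. -/
def matInner {n₁ n₂ : ℕ} (X Y : Matrix (Fin n₁) (Fin n₂) ℝ) : ℝ :=
  (X.transpose * Y).trace

def cmsvMin {n₁ n₂ m : ℕ} (A : Matrix (Fin n₁) (Fin n₂) ℝ → (Fin m → ℝ)) (τ : ℝ) : ℝ :=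
  sInf {c | ∃ X : Matrix (Fin n₁) (Fin n₂) ℝ, X ≠ 0 ∧ lstarRank X ≤ τ ∧ c = vnorm (A X) / frobNorm X}

def cmsvMax {n₁ n₂ m : ℕ} (A : Matrix (Fin n₁) (Fin n₂) ℝ → (Fin m → ℝ)) (τ : ℝ) : ℝ :=
  sSup {c | ∃ X : Matrix (Fin n₁) (Fin n₂) ℝ, X ≠ 0 ∧ lstarRank X ≤ τ ∧ c = vnorm (A X) / frobNorm X}

def rcsvMin {n₁ n₂ m : ℕ} (A : Matrix (Fin n₁) (Fin n₂) ℝ → (Fin m → ℝ)) (r : ℕ) : ℝ :=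
  sInf {c | ∃ X : Matrix (Fin n₁) (Fin n₂) ℝ, X ≠ 0 ∧ X.rank ≤ r ∧ c = vnorm (A X) / frobNorm X}

def rcsvMax {n₁ n₂ m : ℕ} (A : Matrix (Fin n₁) (Fin n₂) ℝ → (Fin m → ℝ)) (r : ℕ) : ℝ :=
  sSup {c | ∃ X : Matrix (Fin n₁) (Fin n₂) ℝ, X ≠ 0 ∧ X.rank ≤ r ∧ c = vnorm (A X) / frobNorm X}

def mRIC {n₁ n₂ m : ℕ} (A : Matrix (Fin n₁) (Fin n₂) ℝ → (Fin m → ℝ)) (r : ℕ) : ℝ :=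
  sInf {δ : ℝ | 0 < δ ∧ ∀ X : Matrix (Fin n₁) (Fin n₂) ℝ, X ≠ 0 → X.rank ≤ r →
    1 - δ ≤ (vnorm (A X)) ^ 2 / (frobNorm X) ^ 2 ∧ (vnorm (A X)) ^ 2 / (frobNorm X) ^ 2 ≤ 1 + δ}

def opOf {n₁ n₂ m : ℕ} (A : Fin m → Matrix (Fin n₁) (Fin n₂) ℝ) :
    Matrix (Fin n₁) (Fin n₂) ℝ → (Fin m → ℝ) :=
  fun X k => matInner (A k) X


open MeasureTheory ProbabilityTheory

/-- The standard Gaussian measure on `K → ℝ`. -/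
abbrev stdGauss (K : Type*) [Fintype K] : Measure (K → ℝ) :=
  Measure.pi fun _ : K => gaussianReal 0 1

theorem hasDerivAt_gaussianPDFReal_std (x : ℝ) :
    HasDerivAt (gaussianPDFReal 0 1) (-(x * gaussianPDFReal 0 1 x)) x := by
  have h : HasDerivAt (fun y : ℝ => -(y - 0) ^ 2 / (2 * ((1 : NNReal) : ℝ))) (-x) x := by
    have h0 := ((((hasDerivAt_id x).sub_const 0).pow 2).neg).div_const (2 * ((1 : NNReal) : ℝ))
    refine h0.congr_deriv ?_
    simp only [id_eq, NNReal.coe_one]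
    push_cast
    ring
  rw [gaussianPDFReal_def]
  refine (h.exp.const_mul _).congr_deriv ?_
  ring

theorem integrable_gaussianReal_iff {f : ℝ → ℝ} :
    Integrable f (gaussianReal 0 1) ↔ Integrable (fun x => f x * gaussianPDFReal 0 1 x) := by
  rw [gaussianReal_of_var_ne_zero 0 one_ne_zero,
    integrable_withDensity_iff (measurable_gaussianPDF 0 1) (by simp [gaussianPDF_lt_top])]
  simp

/-- Gaussian integration by parts. -/
theorem integral_mul_gaussianReal_eq_integral_deriv {f f' : ℝ → ℝ}
    (hf : ∀ x, HasDerivAt f (f' x) x) (hfi : Integrable f (gaussianReal 0 1))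
    (hxf : Integrable (fun x => x * f x) (gaussianReal 0 1))
    (hf' : Integrable f' (gaussianReal 0 1)) :
    ∫ x, x * f x ∂gaussianReal 0 1 = ∫ x, f' x ∂gaussianReal 0 1 := by
  rw [integral_gaussianReal_eq_integral_smul one_ne_zero,
    integral_gaussianReal_eq_integral_smul one_ne_zero]
  rw [integrable_gaussianReal_iff] at hfi hxf hf'
  have h := integral_mul_deriv_eq_deriv_mul_of_integrable (u := f) (u' := f')
    (v := gaussianPDFReal 0 1) (v' := fun x => -(x * gaussianPDFReal 0 1 x))
    (fun x _ => hf x) (fun x _ => hasDerivAt_gaussianPDFReal_std x)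
    (by
      refine hxf.neg.congr (Filter.Eventually.of_forall fun x => ?_)
      simp only [Pi.neg_apply, Pi.mul_apply]
      ring) hf' hfi
  have h2 : ∀ x, gaussianPDFReal 0 1 x • (x * f x) = -(f x * -(x * gaussianPDFReal 0 1 x)) := by
    intro x; simp only [smul_eq_mul]; ring
  simp_rw [h2]
  rw [integral_neg, h, neg_neg]
  simp_rw [smul_eq_mul, mul_comm]

/-- Resampling one coordinate preserves a product of probability measures. -/
theorem measurePreserving_update {K : Type*} [Fintype K] [DecidableEq K] {α : K → Type*}
    [∀ k, MeasurableSpace (α k)] (μ : ∀ k, Measure (α k)) [∀ k, IsProbabilityMeasure (μ k)] (k : K) :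
    MeasurePreserving (fun p : (∀ k, α k) × α k => Function.update p.1 k p.2)
      ((Measure.pi μ).prod (μ k)) (Measure.pi μ) := by
  have hm : Measurable (fun p : (∀ k, α k) × α k => Function.update p.1 k p.2) := by
    refine measurable_pi_iff.2 fun i => ?_
    rcases eq_or_ne i k with rfl | hi
    · simpa using measurable_snd
    · simpa [hi, Function.comp_def] using (measurable_pi_apply i).comp measurable_fst
  refine ⟨hm, ?_⟩
  symm
  refine Measure.pi_eq fun s hs => ?_
  rw [Measure.map_apply hm (MeasurableSet.univ_pi hs)]
  have hpre : (fun p : (∀ k, α k) × α k => Function.update p.1 k p.2) ⁻¹' (Set.univ.pi s) =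
      (Set.univ.pi (Function.update s k Set.univ)) ×ˢ s k := by
    ext ⟨x, y⟩
    simp only [Set.mem_preimage, Set.mem_univ_pi, Set.mem_prod]
    constructor
    · intro h
      refine ⟨fun i => ?_, by simpa using h k⟩
      rcases eq_or_ne i k with rfl | hi
      · simp
      · simpa [hi] using h i
    · rintro ⟨h1, h2⟩ i
      rcases eq_or_ne i k with rfl | hi
      · simpa using h2
      · simpa [hi] using h1 i
  rw [hpre, Measure.prod_prod, Measure.pi_pi, ← Finset.mul_prod_erase _ _ (Finset.mem_univ k),
    ← Finset.mul_prod_erase _ (fun i => μ i (s i)) (Finset.mem_univ k)]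
  have : ∏ i ∈ Finset.univ.erase k, μ i (Function.update s k Set.univ i)
      = ∏ i ∈ Finset.univ.erase k, μ i (s i) :=
    Finset.prod_congr rfl fun i hi => by rw [Function.update_of_ne (Finset.ne_of_mem_erase hi)]
  rw [this]
  simp [mul_comm]

theorem integrable_coord {K : Type*} [Fintype K] (k : K) :
    Integrable (fun ω : K → ℝ => ω k) (stdGauss K) :=
  (measurePreserving_eval (fun _ : K => gaussianReal 0 1) k).integrable_comp_of_integrable
    ((memLp_id_gaussianReal 1).integrable le_rfl)

/-- Gaussian integration by parts in a single coordinate, for bounded functions with bounded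
partial derivative. -/
theorem integral_coord_mul_stdGauss {K : Type*} [Fintype K] [DecidableEq K] (k : K)
    {f f' : (K → ℝ) → ℝ} (hfc : Continuous f) (hfc' : Continuous f')
    (hf : ∀ ω x, HasDerivAt (fun y => f (Function.update ω k y)) (f' (Function.update ω k x)) x)
    {C C' : ℝ} (hC : ∀ ω, |f ω| ≤ C) (hC' : ∀ ω, |f' ω| ≤ C') :
    ∫ ω, ω k * f ω ∂stdGauss K = ∫ ω, f' ω ∂stdGauss K := by
  have hmp := measurePreserving_update (fun _ : K => gaussianReal 0 1) k
  have hid : Integrable (fun x : ℝ => x) (gaussianReal 0 1) :=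
    (memLp_id_gaussianReal 1).integrable le_rfl
  have hkf : Integrable (fun ω : K → ℝ => ω k * f ω) (stdGauss K) :=
    (integrable_coord k).mul_bdd (c := C) hfc.aestronglyMeasurable (Filter.Eventually.of_forall hC)
  have hf'i : Integrable f' (stdGauss K) :=
    Integrable.of_bound hfc'.aestronglyMeasurable C' (Filter.Eventually.of_forall hC')
  have key : ∀ g : (K → ℝ) → ℝ, Integrable g (stdGauss K) → ∫ ω, g ω ∂stdGauss K =
      ∫ ω, ∫ x, g (Function.update ω k x) ∂gaussianReal 0 1 ∂stdGauss K := by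
    intro g hg
    rw [← integral_prod (fun p : (K → ℝ) × ℝ => g (Function.update p.1 k p.2))
      (hmp.integrable_comp_of_integrable hg)]
    have h := integral_map (μ := (stdGauss K).prod (gaussianReal 0 1)) (f := g)
      hmp.aemeasurable (by rw [hmp.map_eq]; exact hg.aestronglyMeasurable)
    rw [hmp.map_eq] at h
    exact h
  rw [key _ hkf, key _ hf'i]
  refine integral_congr_ae (Filter.Eventually.of_forall fun ω => ?_)
  have hu : Continuous (fun x : ℝ => Function.update ω k x) := by fun_prop
  have hfu : Continuous (fun x : ℝ => f (Function.update ω k x)) := hfc.comp hu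
  simp only [Function.update_self]
  refine integral_mul_gaussianReal_eq_integral_deriv (hf ω) ?_ ?_ ?_
  · exact Integrable.of_bound hfu.aestronglyMeasurable C
      (Filter.Eventually.of_forall fun _ => hC _)
  · exact hid.mul_bdd (c := C) hfu.aestronglyMeasurable (Filter.Eventually.of_forall fun _ => hC _)
  · exact Integrable.of_bound (hfc'.comp hu).aestronglyMeasurable C'
      (Filter.Eventually.of_forall fun _ => hC' _)

section LogSumExp

variable {T : Type*} [Fintype T]

/-- The log-sum-exp function. -/
def logSumExp (x : T → ℝ) : ℝ := Real.log (∑ t, Real.exp (x t))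

/-- The softmax function, the gradient of `logSumExp`. -/
def softmax (x : T → ℝ) (t : T) : ℝ := Real.exp (x t) / ∑ s, Real.exp (x s)

theorem sum_exp_pos [Nonempty T] (x : T → ℝ) : 0 < ∑ t, Real.exp (x t) :=
  Finset.sum_pos (fun _ _ => Real.exp_pos _) Finset.univ_nonempty

theorem softmax_nonneg (x : T → ℝ) (t : T) : 0 ≤ softmax x t :=
  div_nonneg (Real.exp_pos _).le (Finset.sum_nonneg fun _ _ => (Real.exp_pos _).le)

theorem sum_softmax [Nonempty T] (x : T → ℝ) : ∑ t, softmax x t = 1 := by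
  unfold softmax
  rw [← Finset.sum_div, div_self (sum_exp_pos x).ne']

theorem softmax_le_one [Nonempty T] (x : T → ℝ) (t : T) : softmax x t ≤ 1 := by
  rw [← sum_softmax x]
  exact Finset.single_le_sum (fun s _ => softmax_nonneg x s) (Finset.mem_univ t)

theorem abs_sum_softmax_mul_le [Nonempty T] (x y : T → ℝ) :
    |∑ t, softmax x t * y t| ≤ ∑ t, |y t| := by
  refine (Finset.abs_sum_le_sum_abs _ _).trans (Finset.sum_le_sum fun t _ => ?_)
  rw [abs_mul, abs_of_nonneg (softmax_nonneg x t)]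
  exact mul_le_of_le_one_left (abs_nonneg _) (softmax_le_one x t)

theorem le_logSumExp (x : T → ℝ) (t : T) : x t ≤ logSumExp x := by
  have : Nonempty T := ⟨t⟩
  rw [logSumExp, Real.le_log_iff_exp_le (sum_exp_pos x)]
  exact Finset.single_le_sum (f := fun s => Real.exp (x s)) (fun _ _ => (Real.exp_pos _).le)
    (Finset.mem_univ t)

theorem logSumExp_le [Nonempty T] {x : T → ℝ} {M : ℝ} (h : ∀ t, x t ≤ M) :
    logSumExp x ≤ M + Real.log (Fintype.card T) := by
  have hc : (0 : ℝ) < Fintype.card T := by exact_mod_cast Fintype.card_pos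
  rw [logSumExp, Real.log_le_iff_le_exp (sum_exp_pos x), Real.exp_add, Real.exp_log hc]
  calc ∑ t, Real.exp (x t) ≤ ∑ _t : T, Real.exp M :=
        Finset.sum_le_sum fun t _ => Real.exp_le_exp.2 (h t)
    _ = Real.exp M * Fintype.card T := by simp [mul_comm]

theorem abs_logSumExp_le [Nonempty T] (x : T → ℝ) :
    |logSumExp x| ≤ ∑ t, |x t| + Real.log (Fintype.card T) := by
  have h (t : T) : |x t| ≤ ∑ s, |x s| :=
    Finset.single_le_sum (f := fun s => |x s|) (fun _ _ => abs_nonneg _) (Finset.mem_univ t)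
  have hlog : 0 ≤ Real.log (Fintype.card T) := Real.log_natCast_nonneg _
  obtain ⟨t⟩ := ‹Nonempty T›
  rw [abs_le]
  constructor
  · have := le_logSumExp x t
    have := neg_abs_le (x t)
    linarith [h t]
  · exact logSumExp_le fun t => (le_abs_self _).trans (h t)

theorem continuous_logSumExp [Nonempty T] : Continuous (logSumExp : (T → ℝ) → ℝ) := by
  unfold logSumExp
  exact Continuous.log (by fun_prop) fun x => (sum_exp_pos x).ne'

theorem continuous_softmax [Nonempty T] (t : T) : Continuous fun x : T → ℝ => softmax x t := by
  unfold softmax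
  exact Continuous.div (by fun_prop) (by fun_prop) fun x => (sum_exp_pos x).ne'

variable {x : ℝ → T → ℝ} {x' : T → ℝ} {θ : ℝ}

theorem hasDerivAt_sum_exp (hx : ∀ t, HasDerivAt (fun θ => x θ t) (x' t) θ) :
    HasDerivAt (fun θ => ∑ t, Real.exp (x θ t)) (∑ t, Real.exp (x θ t) * x' t) θ :=
  HasDerivAt.fun_sum fun t _ => (hx t).exp

theorem hasDerivAt_logSumExp [Nonempty T] (hx : ∀ t, HasDerivAt (fun θ => x θ t) (x' t) θ) :
    HasDerivAt (fun θ => logSumExp (x θ)) (∑ t, softmax (x θ) t * x' t) θ := by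
  refine ((hasDerivAt_sum_exp hx).log (sum_exp_pos _).ne').congr_deriv ?_
  rw [Finset.sum_div]
  exact Finset.sum_congr rfl fun t _ => by rw [softmax]; ring

theorem hasDerivAt_softmax [Nonempty T] (hx : ∀ t, HasDerivAt (fun θ => x θ t) (x' t) θ) (t : T) :
    HasDerivAt (fun θ => softmax (x θ) t)
      (softmax (x θ) t * (x' t - ∑ s, softmax (x θ) s * x' s)) θ := by
  have hS := (sum_exp_pos (x θ)).ne'
  refine ((hx t).exp.div (hasDerivAt_sum_exp hx) hS).congr_deriv ?_
  have h : ∑ s, softmax (x θ) s * x' s =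
      (∑ s, Real.exp (x θ s) * x' s) / ∑ s, Real.exp (x θ s) := by
    rw [Finset.sum_div]
    exact Finset.sum_congr rfl fun t _ => by rw [softmax]; ring
  rw [h, softmax]
  field_simp

end LogSumExp

section Comparison

variable {T K : Type*} [Fintype K]

/-- The linear process with coefficients `c`. -/
def linProc (c : T → K → ℝ) (ω : K → ℝ) (t : T) : ℝ := ∑ k, c t k * ω k

theorem continuous_linProc (c : T → K → ℝ) : Continuous (linProc c) := by
  unfold linProc
  fun_prop

theorem integrable_linProc (c : T → K → ℝ) (t : T) :
    Integrable (fun ω => linProc c ω t) (stdGauss K) :=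
  integrable_finsetSum _ fun k _ => (integrable_coord k).const_mul _

variable [Fintype T]

theorem integrable_logSumExp_linProc [Nonempty T] (c : T → K → ℝ) :
    Integrable (fun ω => logSumExp (linProc c ω)) (stdGauss K) := by
  refine Integrable.mono'
    (g := fun ω => ∑ t, |linProc c ω t| + Real.log (Fintype.card T)) ?_
    (continuous_logSumExp.comp (continuous_linProc c)).aestronglyMeasurable
    (Filter.Eventually.of_forall fun ω => abs_logSumExp_le _)
  exact (integrable_finsetSum _ fun t _ => (integrable_linProc c t).abs).add
    (integrable_const _)

/-- Gaussian integration by parts for the softmax of a linear process. -/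
theorem integral_softmax_mul_linProc [Nonempty T] (c d : T → K → ℝ) (t : T) :
    ∫ ω, softmax (linProc c ω) t * linProc d ω t ∂stdGauss K =
      ∫ ω, softmax (linProc c ω) t * (∑ k, d t k * c t k
        - ∑ s, softmax (linProc c ω) s * ∑ k, d t k * c s k) ∂stdGauss K := by
  classical
  have hsc (t : T) : Continuous fun ω => softmax (linProc c ω) t :=
    (continuous_softmax t).comp (continuous_linProc c)
  have habs (ω) (t : T) : |softmax (linProc c ω) t| ≤ 1 := by
    rw [abs_of_nonneg (softmax_nonneg _ _)]; exact softmax_le_one _ _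
  have hcont (k : K) : Continuous fun ω => softmax (linProc c ω) t *
      (c t k - ∑ s, softmax (linProc c ω) s * c s k) := by fun_prop
  have hbd (k : K) (ω : K → ℝ) : |softmax (linProc c ω) t *
      (c t k - ∑ s, softmax (linProc c ω) s * c s k)| ≤ |c t k| + ∑ s, |c s k| := by
    rw [abs_mul]
    refine (mul_le_of_le_one_left (abs_nonneg _) (habs ω t)).trans ((abs_sub _ _).trans ?_)
    exact add_le_add_right (abs_sum_softmax_mul_le _ fun s => c s k) _
  have hparts (k : K) : ∫ ω, ω k * softmax (linProc c ω) t ∂stdGauss K =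
      ∫ ω, softmax (linProc c ω) t *
        (c t k - ∑ s, softmax (linProc c ω) s * c s k) ∂stdGauss K := by
    refine integral_coord_mul_stdGauss k (hsc t) (hcont k) (fun ω x => ?_)
      (fun ω => habs ω t) (hbd k)
    refine hasDerivAt_softmax (x := fun y => linProc c (Function.update ω k y))
      (x' := fun s => c s k) (fun s => ?_) t
    unfold linProc
    have h (y : ℝ) : ∑ i, c s i * Function.update ω k y i =
        c s k * y + ∑ i ∈ Finset.univ.erase k, c s i * ω i := by
      rw [← Finset.add_sum_erase _ _ (Finset.mem_univ k), Function.update_self]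
      congr 1
      exact Finset.sum_congr rfl fun i hi => by
        rw [Function.update_of_ne (Finset.ne_of_mem_erase hi)]
    simp_rw [h]
    simpa using ((hasDerivAt_id x).const_mul (c s k)).add_const
      (∑ i ∈ Finset.univ.erase k, c s i * ω i)
  have hint1 (k : K) : Integrable (fun ω => ω k * softmax (linProc c ω) t) (stdGauss K) :=
    (integrable_coord k).mul_bdd (c := 1) (hsc t).aestronglyMeasurable
      (Filter.Eventually.of_forall fun ω => habs ω t)
  have hint2 (k : K) : Integrable (fun ω => softmax (linProc c ω) t *
      (c t k - ∑ s, softmax (linProc c ω) s * c s k)) (stdGauss K) :=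
    Integrable.of_bound (hcont k).aestronglyMeasurable _ (Filter.Eventually.of_forall (hbd k))
  calc ∫ ω, softmax (linProc c ω) t * linProc d ω t ∂stdGauss K
      = ∫ ω, ∑ k, d t k * (ω k * softmax (linProc c ω) t) ∂stdGauss K := by
        refine integral_congr_ae (Filter.Eventually.of_forall fun ω => ?_)
        simp only [linProc, Finset.mul_sum]
        exact Finset.sum_congr rfl fun k _ => by ring
    _ = ∑ k, d t k * ∫ ω, ω k * softmax (linProc c ω) t ∂stdGauss K := by
        rw [integral_finsetSum _ fun k _ => (hint1 k).const_mul _]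
        simp_rw [integral_const_mul]
    _ = ∫ ω, ∑ k, d t k * (softmax (linProc c ω) t *
          (c t k - ∑ s, softmax (linProc c ω) s * c s k)) ∂stdGauss K := by
        rw [integral_finsetSum _ fun k _ => (hint2 k).const_mul _]
        simp_rw [integral_const_mul, hparts]
    _ = _ := by
        refine integral_congr_ae (Filter.Eventually.of_forall fun ω => ?_)
        simp only [mul_sub, Finset.mul_sum, Finset.sum_sub_distrib]
        rw [Finset.sum_comm]
        congr 1
        · exact Finset.sum_congr rfl fun k _ => by ring
        · exact Finset.sum_congr rfl fun k _ => Finset.sum_congr rfl fun k _ => by ring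

/-- For a probability vector `p` and a kernel `D` with nonnegative increments,
`∑ p_t (D_tt - ∑ p_s D_ts)` is nonnegative. -/
theorem sum_mul_diag_sub_nonneg {p : T → ℝ} (hp : ∀ t, 0 ≤ p t) (hp1 : ∑ t, p t = 1)
    {D : T → T → ℝ} (hD : ∀ t s, D t s + D s t ≤ D t t + D s s) :
    0 ≤ ∑ t, p t * (D t t - ∑ s, p s * D t s) := by
  have h1 : ∑ t, p t * (D t t - ∑ s, p s * D t s) = ∑ t, ∑ s, p t * p s * (D t t - D t s) := by
    refine Finset.sum_congr rfl fun t _ => ?_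
    have : D t t = ∑ s, p s * D t t := by rw [← Finset.sum_mul, hp1, one_mul]
    conv_lhs => rw [this]
    rw [← Finset.sum_sub_distrib, Finset.mul_sum]
    exact Finset.sum_congr rfl fun s _ => by ring
  have h2 : ∑ t, ∑ s, p t * p s * (D t t - D t s) = ∑ t, ∑ s, p t * p s * (D s s - D s t) := by
    rw [Finset.sum_comm]
    exact Finset.sum_congr rfl fun s _ => Finset.sum_congr rfl fun t _ => by ring
  have h3 : 0 ≤ ∑ t, ∑ s, p t * p s * (D t t - D t s) + ∑ t, ∑ s, p t * p s * (D s s - D s t) := by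
    simp_rw [← Finset.sum_add_distrib]
    refine Finset.sum_nonneg fun t _ => Finset.sum_nonneg fun s _ => ?_
    rw [← mul_add]
    exact mul_nonneg (mul_nonneg (hp t) (hp s)) (by linarith [hD t s])
  rw [h1]
  linarith

/-- Sudakov–Fernique comparison for the log-sum-exp of two independent Gaussian processes
`linProc a` and `linProc b`. -/
theorem integral_logSumExp_linProc_le [Nonempty T] {a b : T → K → ℝ}
    (hab : ∀ t s, ∑ k, a t k * b s k = 0)
    (hinc : ∀ t s, ∑ k, (a t k - a s k) ^ 2 ≤ ∑ k, (b t k - b s k) ^ 2) :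
    ∫ ω, logSumExp (linProc a ω) ∂stdGauss K ≤ ∫ ω, logSumExp (linProc b ω) ∂stdGauss K := by
  set c : ℝ → T → K → ℝ := fun θ t k => Real.cos θ * a t k + Real.sin θ * b t k with hc
  set d : ℝ → T → K → ℝ := fun θ t k => -Real.sin θ * a t k + Real.cos θ * b t k with hd
  set φ : ℝ → ℝ := fun θ => ∫ ω, logSumExp (linProc (c θ) ω) ∂stdGauss K with hφ
  have hsc (θ : ℝ) (t : T) : Continuous fun ω => softmax (linProc (c θ) ω) t :=
    (continuous_softmax t).comp (continuous_linProc (c θ))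
  have hlc (θ : ℝ) (t : T) : Continuous fun ω => linProc (d θ) ω t :=
    (continuous_apply t).comp (continuous_linProc (d θ))
  have hderiv (θ : ℝ) : HasDerivAt φ
      (∫ ω, ∑ t, softmax (linProc (c θ) ω) t * linProc (d θ) ω t ∂stdGauss K) θ := by
    refine (hasDerivAt_integral_of_dominated_loc_of_deriv_le (s := Set.univ)
      (bound := fun ω => ∑ t, ∑ k, (|a t k| + |b t k|) * |ω k|) Filter.univ_mem
      (Filter.Eventually.of_forall fun θ => (integrable_logSumExp_linProc (c θ)).1)
      (integrable_logSumExp_linProc (c θ)) (F' := fun θ ω => ∑ t, softmax (linProc (c θ) ω) t *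
        linProc (d θ) ω t) ?_ ?_ ?_ ?_).2
    · exact Continuous.aestronglyMeasurable (by fun_prop)
    · refine Filter.Eventually.of_forall fun ω θ _ => ?_
      refine (abs_sum_softmax_mul_le _ _).trans (Finset.sum_le_sum fun t _ => ?_)
      refine (Finset.abs_sum_le_sum_abs _ _).trans (Finset.sum_le_sum fun k _ => ?_)
      rw [abs_mul]
      refine mul_le_mul_of_nonneg_right ((abs_add_le _ _).trans ?_) (abs_nonneg _)
      rw [abs_mul, abs_mul, abs_neg]
      exact add_le_add (mul_le_of_le_one_left (abs_nonneg _) (Real.abs_sin_le_one θ))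
        (mul_le_of_le_one_left (abs_nonneg _) (Real.abs_cos_le_one θ))
    · exact integrable_finsetSum _ fun t _ => integrable_finsetSum _ fun k _ =>
        (integrable_coord k).abs.const_mul _
    · refine Filter.Eventually.of_forall fun ω θ _ => ?_
      refine hasDerivAt_logSumExp (x := fun θ => linProc (c θ) ω) fun t => ?_
      refine HasDerivAt.fun_sum fun k _ => ?_
      exact (((Real.hasDerivAt_cos θ).mul_const _).add
        ((Real.hasDerivAt_sin θ).mul_const _)).mul_const _
  have hnonneg (θ : ℝ) (hθ : θ ∈ Set.Icc 0 (Real.pi / 2)) :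
      0 ≤ ∫ ω, ∑ t, softmax (linProc (c θ) ω) t * linProc (d θ) ω t ∂stdGauss K := by
    set D : T → T → ℝ := fun t s => ∑ k, d θ t k * c θ s k with hD
    have hi1 (t : T) : Integrable (fun ω => softmax (linProc (c θ) ω) t * linProc (d θ) ω t)
        (stdGauss K) := by
      refine (integrable_linProc (d θ) t).bdd_mul (c := 1) (hsc θ t).aestronglyMeasurable
        (Filter.Eventually.of_forall fun ω => ?_)
      rw [Real.norm_of_nonneg (softmax_nonneg _ _)]
      exact softmax_le_one _ _
    have hi2 (t : T) : Integrable (fun ω => softmax (linProc (c θ) ω) t *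
        (D t t - ∑ s, softmax (linProc (c θ) ω) s * D t s)) (stdGauss K) := by
      refine Integrable.of_bound (Continuous.aestronglyMeasurable (by fun_prop))
        (|D t t| + ∑ s, |D t s|) (Filter.Eventually.of_forall fun ω => ?_)
      rw [norm_mul, Real.norm_of_nonneg (softmax_nonneg _ _)]
      refine (mul_le_of_le_one_left (norm_nonneg _) (softmax_le_one _ _)).trans
        ((abs_sub _ _).trans (add_le_add_right (abs_sum_softmax_mul_le _ _) _))
    rw [integral_finsetSum _ fun t _ => hi1 t]
    simp_rw [integral_softmax_mul_linProc]
    rw [← integral_finsetSum _ fun t _ => hi2 t]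
    refine integral_nonneg fun ω => ?_
    refine sum_mul_diag_sub_nonneg (softmax_nonneg _) (sum_softmax _) fun t s => ?_
    have hDe (t s : T) : D t s = Real.sin θ * Real.cos θ *
        (∑ k, b t k * b s k - ∑ k, a t k * a s k) := by
      have : D t s = Real.sin θ * Real.cos θ * (∑ k, b t k * b s k - ∑ k, a t k * a s k)
          - Real.sin θ ^ 2 * ∑ k, a t k * b s k + Real.cos θ ^ 2 * ∑ k, a s k * b t k := by
        simp only [hD, hc, hd, Finset.mul_sum, mul_sub, ← Finset.sum_sub_distrib,
          ← Finset.sum_add_distrib]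
        exact Finset.sum_congr rfl fun k _ => by ring
      rw [this, hab, hab]
      ring
    have hsq (f : T → K → ℝ) : ∑ k, (f t k - f s k) ^ 2 = ∑ k, f t k * f t k
        + ∑ k, f s k * f s k - ∑ k, f t k * f s k - ∑ k, f s k * f t k := by
      simp only [← Finset.sum_sub_distrib, ← Finset.sum_add_distrib]
      exact Finset.sum_congr rfl fun k _ => by ring
    have hsc0 : 0 ≤ Real.sin θ * Real.cos θ :=
      mul_nonneg (Real.sin_nonneg_of_nonneg_of_le_pi hθ.1 (by linarith [hθ.2, Real.pi_pos]))
        (Real.cos_nonneg_of_neg_pi_div_two_le_of_le (by linarith [hθ.1, Real.pi_pos]) hθ.2)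
    have hi := hinc t s
    rw [hsq, hsq] at hi
    rw [hDe, hDe, hDe, hDe, ← mul_add, ← mul_add]
    exact mul_le_mul_of_nonneg_left (by linarith) hsc0
  have hmono : MonotoneOn φ (Set.Icc 0 (Real.pi / 2)) := by
    refine monotoneOn_of_deriv_nonneg (convex_Icc _ _)
      (fun θ _ => (hderiv θ).continuousAt.continuousWithinAt)
      (fun θ _ => (hderiv θ).differentiableAt.differentiableWithinAt) fun θ hθ => ?_
    rw [(hderiv θ).deriv]
    exact hnonneg θ (interior_subset hθ)
  have hpi : (0 : ℝ) ≤ Real.pi / 2 := by positivity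
  have h := hmono (Set.left_mem_Icc.2 hpi) (Set.right_mem_Icc.2 hpi) hpi
  simpa [hφ, hc] using h

end Comparison

section MatrixNorms

variable {n₁ n₂ : ℕ}

/-- The linear map `u ↦ Gᵀ u` between Euclidean spaces. -/
def transposeCLM (G : Matrix (Fin n₁) (Fin n₂) ℝ) :
    EuclideanSpace ℝ (Fin n₁) →L[ℝ] EuclideanSpace ℝ (Fin n₂) :=
  LinearMap.toContinuousLinearMap (Matrix.toEuclideanLin G.transpose)

theorem transposeCLM_apply (G : Matrix (Fin n₁) (Fin n₂) ℝ) (u : EuclideanSpace ℝ (Fin n₁)) :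
    transposeCLM G u = WithLp.toLp 2 (G.transpose.mulVec u) := rfl

theorem inner_transposeCLM (G X : Matrix (Fin n₁) (Fin n₂) ℝ) (u w : EuclideanSpace ℝ (Fin n₁)) :
    inner ℝ (transposeCLM X u) (transposeCLM G w) =
      inner ℝ u (WithLp.toLp 2 ((X * G.transpose).mulVec w)) := by
  simp only [transposeCLM_apply, EuclideanSpace.inner_eq_star_dotProduct, star_trivial]
  rw [← Matrix.mulVec_mulVec, Matrix.mulVec_transpose X, dotProduct_comm,
    ← Matrix.dotProduct_mulVec, dotProduct_comm]

theorem inner_transposeCLM_eigenvectorBasis (G : Matrix (Fin n₁) (Fin n₂) ℝ)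
    (u : EuclideanSpace ℝ (Fin n₁)) (i : Fin n₁) :
    inner ℝ (transposeCLM G u) (transposeCLM G
        ((Matrix.isHermitian_mul_conjTranspose_self G).eigenvectorBasis i)) =
      (Matrix.isHermitian_mul_conjTranspose_self G).eigenvalues i *
        inner ℝ u ((Matrix.isHermitian_mul_conjTranspose_self G).eigenvectorBasis i) := by
  rw [inner_transposeCLM, ← Matrix.conjTranspose_eq_transpose_of_trivial,
    (Matrix.isHermitian_mul_conjTranspose_self G).mulVec_eigenvectorBasis i, WithLp.toLp_smul,
    inner_smul_right]

theorem eigenvalues_eq_norm_sq (G : Matrix (Fin n₁) (Fin n₂) ℝ) (i : Fin n₁) :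
    (Matrix.isHermitian_mul_conjTranspose_self G).eigenvalues i =
      ‖transposeCLM G ((Matrix.isHermitian_mul_conjTranspose_self G).eigenvectorBasis i)‖ ^ 2 := by
  rw [← real_inner_self_eq_norm_sq, inner_transposeCLM_eigenvectorBasis,
    real_inner_self_eq_norm_sq]
  simp

theorem singVals_eq_norm (G : Matrix (Fin n₁) (Fin n₂) ℝ) (i : Fin n₁) :
    singVals G i =
      ‖transposeCLM G ((Matrix.isHermitian_mul_conjTranspose_self G).eigenvectorBasis i)‖ := by
  rw [singVals, eigenvalues_eq_norm_sq, Real.sqrt_sq (norm_nonneg _)]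

theorem matOpNorm_nonneg (G : Matrix (Fin n₁) (Fin n₂) ℝ) : 0 ≤ matOpNorm G :=
  Real.iSup_nonneg fun _ => Real.sqrt_nonneg _

theorem matOpNorm_eq_norm (G : Matrix (Fin n₁) (Fin n₂) ℝ) : matOpNorm G = ‖transposeCLM G‖ := by
  apply le_antisymm
  · refine Real.iSup_le (fun i => ?_) (norm_nonneg _)
    rw [singVals_eq_norm]
    exact (transposeCLM G).unit_le_opNorm _ (by simp)
  · refine ContinuousLinearMap.opNorm_le_bound _ (matOpNorm_nonneg G) fun u => ?_
    set b := (Matrix.isHermitian_mul_conjTranspose_self G).eigenvectorBasis with hb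
    refine le_of_sq_le_sq ?_ (mul_nonneg (matOpNorm_nonneg G) (norm_nonneg u))
    have h1 : ‖transposeCLM G u‖ ^ 2 = ∑ i, singVals G i ^ 2 * inner ℝ u (b i) ^ 2 := by
      have hu : transposeCLM G u = ∑ i, inner ℝ (b i) u • transposeCLM G (b i) := by
        conv_lhs => rw [← b.sum_repr' u]
        simp
      rw [← real_inner_self_eq_norm_sq]
      conv_lhs => rw [hu, inner_sum, ← hu]
      refine Finset.sum_congr rfl fun i _ => ?_
      rw [inner_smul_right, hb, inner_transposeCLM_eigenvectorBasis, ← hb, real_inner_comm,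
        singVals_eq_norm, eigenvalues_eq_norm_sq]
      ring
    have h2 : ‖u‖ ^ 2 = ∑ i, inner ℝ u (b i) ^ 2 := by
      rw [← b.sum_sq_norm_inner_left u]
      simp
    rw [h1, mul_pow, h2, Finset.mul_sum]
    refine Finset.sum_le_sum fun i _ => mul_le_mul_of_nonneg_right ?_ (sq_nonneg _)
    exact pow_le_pow_left₀ (Real.sqrt_nonneg _)
      (le_ciSup (f := singVals G) (Set.finite_range _).bddAbove i) 2

theorem matInner_eq_sum_inner (G X : Matrix (Fin n₁) (Fin n₂) ℝ)
    (b : OrthonormalBasis (Fin n₁) ℝ (EuclideanSpace ℝ (Fin n₁))) :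
    matInner G X = ∑ i, inner ℝ (transposeCLM X (b i)) (transposeCLM G (b i)) := by
  simp_rw [inner_transposeCLM]
  rw [matInner, Matrix.trace_mul_comm, ← Matrix.trace_toLin_eq (X * G.transpose)
    (EuclideanSpace.basisFun (Fin n₁) ℝ).toBasis, LinearMap.trace_eq_sum_inner _ b]
  rfl

/-- Duality between the operator norm and the nuclear norm. -/
theorem matInner_le_nuclearNorm_mul_matOpNorm (G X : Matrix (Fin n₁) (Fin n₂) ℝ) :
    matInner G X ≤ nuclearNorm X * matOpNorm G := by
  set b := (Matrix.isHermitian_mul_conjTranspose_self X).eigenvectorBasis with hb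
  rw [matInner_eq_sum_inner G X b, nuclearNorm, Finset.sum_mul]
  refine Finset.sum_le_sum fun i _ => (real_inner_le_norm _ _).trans ?_
  rw [singVals_eq_norm, matOpNorm_eq_norm]
  exact mul_le_mul_of_nonneg_left ((transposeCLM G).unit_le_opNorm _ (by simp)) (norm_nonneg _)

theorem sSup_matInner_le {τ : ℝ} (G : Matrix (Fin n₁) (Fin n₂) ℝ) :
    sSup {c | ∃ X : Matrix (Fin n₁) (Fin n₂) ℝ,
        frobNorm X = 1 ∧ nuclearNorm X ^ 2 ≤ τ ∧ c = matInner G X} ≤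
      Real.sqrt τ * matOpNorm G := by
  refine Real.sSup_le ?_ (mul_nonneg (Real.sqrt_nonneg _) (matOpNorm_nonneg G))
  rintro _ ⟨X, -, hX, rfl⟩
  exact (matInner_le_nuclearNorm_mul_matOpNorm G X).trans
    (mul_le_mul_of_nonneg_right (Real.le_sqrt_of_sq_le hX) (matOpNorm_nonneg G))

end MatrixNorms

section GaussianMatrix

variable {n₁ n₂ : ℕ}

theorem integrable_linearMap_stdGauss {K E : Type*} [Fintype K] [NormedAddCommGroup E]
    [NormedSpace ℝ E] (L : (K → ℝ) →ₗ[ℝ] E) : Integrable (fun ω => L ω) (stdGauss K) := by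
  classical
  rw [funext L.pi_apply_eq_sum_univ]
  exact integrable_finsetSum _ fun k _ => (integrable_coord k).smul_const _

theorem integrable_matOpNorm_stdGauss :
    Integrable (fun ω : Fin n₁ × Fin n₂ → ℝ => matOpNorm (Matrix.of fun i j => ω (i, j)))
      (stdGauss (Fin n₁ × Fin n₂)) := by
  let L : (Fin n₁ × Fin n₂ → ℝ) →ₗ[ℝ]
      (EuclideanSpace ℝ (Fin n₁) →L[ℝ] EuclideanSpace ℝ (Fin n₂)) :=
    { toFun := fun ω => transposeCLM (Matrix.of fun i j => ω (i, j))
      map_add' := fun ω ω' => by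
        ext u j
        simp [transposeCLM_apply, Matrix.mulVec, dotProduct, add_mul, Finset.sum_add_distrib]
      map_smul' := fun r ω => by
        ext u j
        simp [transposeCLM_apply, Matrix.mulVec, dotProduct, mul_assoc, Finset.mul_sum] }
  simp_rw [matOpNorm_eq_norm]
  exact (integrable_linearMap_stdGauss L).norm

theorem exists_finite_net_sphere (n : ℕ) {ε : ℝ} (hε : 0 < ε) :
    ∃ s : Set (EuclideanSpace ℝ (Fin n)), s.Finite ∧ (∀ u ∈ s, ‖u‖ = 1) ∧
      ∀ u, ‖u‖ = 1 → ∃ u' ∈ s, ‖u - u'‖ ≤ ε := by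
  obtain ⟨s, hs, hfin, hcov⟩ :=
    (isCompact_sphere (0 : EuclideanSpace ℝ (Fin n)) 1).finite_cover_balls hε
  refine ⟨s, hfin, fun u hu => by simpa using hs hu, fun u hu => ?_⟩
  obtain ⟨u', hu', h⟩ := Set.mem_iUnion₂.1 (hcov (show u ∈ Metric.sphere 0 1 by simpa using hu))
  exact ⟨u', hu', by rw [← dist_eq_norm]; exact (Metric.mem_ball.1 h).le⟩

/-- A bound for a bilinear form on nets of the spheres bounds its norm. -/
theorem opNorm_le_of_net {E F : Type*} [NormedAddCommGroup E] [InnerProductSpace ℝ E]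
    [NormedAddCommGroup F] [InnerProductSpace ℝ F] [Nontrivial E] [Nontrivial F] (A : E →L[ℝ] F)
    {ε M : ℝ} {s : Set E} {t : Set F} (hs1 : ∀ u ∈ s, ‖u‖ = 1)
    (hs : ∀ u, ‖u‖ = 1 → ∃ u' ∈ s, ‖u - u'‖ ≤ ε) (ht : ∀ v, ‖v‖ = 1 → ∃ v' ∈ t, ‖v - v'‖ ≤ ε)
    (h : ∀ u ∈ s, ∀ v ∈ t, inner ℝ v (A u) ≤ M) : ‖A‖ ≤ M + 2 * ε * ‖A‖ := by
  have hunit (u : E) (hu : ‖u‖ = 1) (v : F) (hv : ‖v‖ = 1) :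
      inner ℝ v (A u) ≤ M + 2 * ε * ‖A‖ := by
    obtain ⟨u', hu's, hu'⟩ := hs u hu
    obtain ⟨v', hv's, hv'⟩ := ht v hv
    have hsplit : inner ℝ v (A u) =
        inner ℝ v' (A u') + inner ℝ (v - v') (A u') + inner ℝ v (A (u - u')) := by
      rw [map_sub, inner_sub_left, inner_sub_right]
      ring
    have h1 : inner ℝ (v - v') (A u') ≤ ε * ‖A‖ :=
      (real_inner_le_norm _ _).trans
        (mul_le_mul hv' (A.unit_le_opNorm u' (hs1 u' hu's).le) (norm_nonneg _)
          ((norm_nonneg _).trans hv'))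
    have h2 : inner ℝ v (A (u - u')) ≤ ε * ‖A‖ := by
      refine (real_inner_le_norm _ _).trans ?_
      rw [hv, one_mul, mul_comm]
      exact (A.le_opNorm _).trans (mul_le_mul_of_nonneg_left hu' (norm_nonneg _))
    linarith [h u' hu's v' hv's]
  obtain ⟨u₀, hu₀⟩ := exists_norm_eq E zero_le_one
  obtain ⟨v₀, hv₀⟩ := exists_norm_eq F zero_le_one
  have hM : 0 ≤ M + 2 * ε * ‖A‖ := by
    have h1 := hunit u₀ hu₀ v₀ hv₀
    have h2 := hunit u₀ hu₀ (-v₀) (by rwa [norm_neg])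
    rw [inner_neg_left] at h2
    linarith
  refine A.opNorm_le_of_unit_norm hM fun u hu => ?_
  rcases eq_or_ne (A u) 0 with h0 | h0
  · simpa [h0] using hM
  · have hn : ‖A u‖ ≠ 0 := norm_ne_zero_iff.2 h0
    have h1 := hunit u hu (‖A u‖⁻¹ • A u) (by rw [norm_smul, norm_inv, norm_norm, inv_mul_cancel₀ hn])
    rwa [real_inner_smul_left, real_inner_self_eq_norm_sq, pow_two, inv_mul_cancel_left₀ hn] at h1

theorem measurePreserving_comp_inl (I J : Type*) [Fintype I] [Fintype J] :
    MeasurePreserving (fun (ω : I ⊕ J → ℝ) (i : I) => ω (Sum.inl i))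
      (stdGauss (I ⊕ J)) (stdGauss I) :=
  measurePreserving_fst.comp
    (measurePreserving_sumPiEquivProdPi (fun _ : I ⊕ J => gaussianReal 0 1))

theorem integral_coord_sq {K : Type*} [Fintype K] (k : K) :
    Integrable (fun ω : K → ℝ => ω k ^ 2) (stdGauss K) ∧ ∫ ω, ω k ^ 2 ∂stdGauss K = 1 := by
  have hmp := measurePreserving_eval (fun _ : K => gaussianReal 0 1) k
  have hsq : Integrable (fun x : ℝ => x ^ 2) (gaussianReal 0 1) :=
    (memLp_id_gaussianReal 2).integrable_sq
  refine ⟨hmp.integrable_comp_of_integrable hsq, ?_⟩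
  have h := integral_map (μ := stdGauss K) (f := fun x : ℝ => x ^ 2) hmp.aemeasurable
    (by rw [hmp.map_eq]; exact hsq.aestronglyMeasurable)
  rw [hmp.map_eq] at h
  refine h.symm.trans ?_
  have hv := variance_fun_id_gaussianReal (μ := 0) (v := 1)
  rw [variance_eq_integral (by fun_prop)] at hv
  simpa [integral_id_gaussianReal] using hv

/-- The expected Euclidean norm of a family of `n` standard Gaussian coordinates is at most
`√n`. -/
theorem integral_norm_coords_le {K : Type*} [Fintype K] {n : ℕ} (hn : 0 < n) (e : Fin n → K) :
    Integrable (fun ω : K → ℝ => ‖WithLp.toLp 2 (fun i => ω (e i))‖) (stdGauss K) ∧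
      ∫ ω, ‖WithLp.toLp 2 (fun i => ω (e i))‖ ∂stdGauss K ≤ Real.sqrt n := by
  have hs : 0 < Real.sqrt n := Real.sqrt_pos.2 (by exact_mod_cast hn)
  have hbound (ω : K → ℝ) : ‖WithLp.toLp 2 (fun i => ω (e i))‖ ≤
      ((∑ i, ω (e i) ^ 2) / Real.sqrt n + Real.sqrt n) / 2 := by
    have h : ∑ i, ω (e i) ^ 2 = ‖WithLp.toLp 2 (fun i => ω (e i))‖ ^ 2 := by
      simp [EuclideanSpace.norm_sq_eq]
    rw [h, le_div_iff₀ two_pos, div_add' _ _ _ hs.ne', le_div_iff₀ hs]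
    nlinarith [sq_nonneg (‖WithLp.toLp 2 (fun i => ω (e i))‖ - Real.sqrt n)]
  have hsum : Integrable (fun ω : K → ℝ => ∑ i, ω (e i) ^ 2) (stdGauss K) :=
    integrable_finsetSum _ fun i _ => (integral_coord_sq (e i)).1
  have hint : Integrable (fun ω : K → ℝ => ((∑ i, ω (e i) ^ 2) / Real.sqrt n + Real.sqrt n) / 2)
      (stdGauss K) := ((hsum.div_const _).add (integrable_const _)).div_const _
  have hi : Integrable (fun ω : K → ℝ => ‖WithLp.toLp 2 (fun i => ω (e i))‖) (stdGauss K) := by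
    refine hint.mono' (Continuous.aestronglyMeasurable (by fun_prop))
      (Filter.Eventually.of_forall fun ω => ?_)
    rw [norm_norm]
    exact hbound ω
  refine ⟨hi, (integral_mono hi hint hbound).trans_eq ?_⟩
  rw [integral_div, integral_add (hsum.div_const _) (integrable_const _), integral_div,
    integral_finsetSum _ fun i _ => (integral_coord_sq (e i)).1]
  simp only [(integral_coord_sq _).2]
  simp

theorem sum_sub_sq_of_norm_eq_one {n : ℕ} {u u' : EuclideanSpace ℝ (Fin n)} (hu : ‖u‖ = 1)
    (hu' : ‖u'‖ = 1) : ∑ i, (u i - u' i) ^ 2 = 2 - 2 * inner ℝ u u' := by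
  have h := norm_sub_sq_real u u'
  rw [hu, hu', EuclideanSpace.norm_sq_eq] at h
  simp only [PiLp.sub_apply, Real.norm_eq_abs, sq_abs] at h
  linarith

theorem sum_tensor_sub_sq {m n : ℕ} {u u' : EuclideanSpace ℝ (Fin m)}
    {v v' : EuclideanSpace ℝ (Fin n)} (hu : ‖u‖ = 1) (hu' : ‖u'‖ = 1) (hv : ‖v‖ = 1)
    (hv' : ‖v'‖ = 1) :
    ∑ p : Fin m × Fin n, (u p.1 * v p.2 - u' p.1 * v' p.2) ^ 2 =
      2 - 2 * (inner ℝ u u' * inner ℝ v v') := by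
  have hsq {k : ℕ} {w : EuclideanSpace ℝ (Fin k)} (hw : ‖w‖ = 1) : ∑ i, w i ^ 2 = 1 := by
    have h := EuclideanSpace.norm_sq_eq w
    rw [hw] at h
    simpa using h.symm
  have hinner {k : ℕ} (w w' : EuclideanSpace ℝ (Fin k)) : inner ℝ w w' = ∑ i, w i * w' i := by
    simp [PiLp.inner_apply, mul_comm]
  have h : ∑ p : Fin m × Fin n, (u p.1 * v p.2 - u' p.1 * v' p.2) ^ 2 =
      (∑ i, u i ^ 2) * (∑ j, v j ^ 2) + (∑ i, u' i ^ 2) * (∑ j, v' j ^ 2)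
        - 2 * ((∑ i, u i * u' i) * ∑ j, v j * v' j) := by
    have hmul (f : Fin m → ℝ) (g : Fin n → ℝ) :
        (∑ i, f i) * ∑ j, g j = ∑ p : Fin m × Fin n, f p.1 * g p.2 := by
      rw [Fintype.sum_mul_sum, Fintype.sum_prod_type]
    rw [hmul, hmul, hmul, Finset.mul_sum, ← Finset.sum_add_distrib, ← Finset.sum_sub_distrib]
    exact Finset.sum_congr rfl fun p _ => by ring
  rw [h, hsq hu, hsq hu', hsq hv, hsq hv', hinner, hinner]
  ring

/-- Coefficients of the process `(u, v) ↦ β ⟨v, Gᵀ u⟩`. -/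
def bilinCoeff {m n : ℕ} (β : ℝ) (p : EuclideanSpace ℝ (Fin m) × EuclideanSpace ℝ (Fin n)) :
    (Fin m × Fin n) ⊕ (Fin m ⊕ Fin n) → ℝ :=
  Sum.elim (fun q => β * (p.1 q.1 * p.2 q.2)) 0

/-- Coefficients of the process `(u, v) ↦ β (⟨u, g⟩ + ⟨v, h⟩)`. -/
def splitCoeff {m n : ℕ} (β : ℝ) (p : EuclideanSpace ℝ (Fin m) × EuclideanSpace ℝ (Fin n)) :
    (Fin m × Fin n) ⊕ (Fin m ⊕ Fin n) → ℝ :=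
  Sum.elim 0 (Sum.elim (fun i => β * p.1 i) (fun j => β * p.2 j))

theorem sum_bilinCoeff_sub_sq_le {m n : ℕ} (β : ℝ)
    {p q : EuclideanSpace ℝ (Fin m) × EuclideanSpace ℝ (Fin n)} (hp₁ : ‖p.1‖ = 1) (hp₂ : ‖p.2‖ = 1)
    (hq₁ : ‖q.1‖ = 1) (hq₂ : ‖q.2‖ = 1) :
    ∑ k, (bilinCoeff β p k - bilinCoeff β q k) ^ 2 ≤
      ∑ k, (splitCoeff β p k - splitCoeff β q k) ^ 2 := by
  simp only [bilinCoeff, splitCoeff, Fintype.sum_sum_type, Sum.elim_inl, Sum.elim_inr,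
    Pi.zero_apply, sub_self, ne_eq, OfNat.ofNat_ne_zero, not_false_eq_true, zero_pow,
    Finset.sum_const_zero, add_zero, zero_add, ← mul_sub, mul_pow, ← Finset.mul_sum, ← mul_add]
  rw [sum_tensor_sub_sq hp₁ hq₁ hp₂ hq₂, sum_sub_sq_of_norm_eq_one hp₁ hq₁,
    sum_sub_sq_of_norm_eq_one hp₂ hq₂]
  refine mul_le_mul_of_nonneg_left ?_ (sq_nonneg β)
  have h₁ : inner ℝ p.1 q.1 ≤ 1 := by simpa [hp₁, hq₁] using real_inner_le_norm p.1 q.1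
  have h₂ : inner ℝ p.2 q.2 ≤ 1 := by simpa [hp₂, hq₂] using real_inner_le_norm p.2 q.2
  nlinarith [mul_nonneg (sub_nonneg.2 h₁) (sub_nonneg.2 h₂)]

/-- The expected operator norm of an `n₁ × n₂` standard Gaussian matrix is at most
`√n₁ + √n₂`. -/
theorem integral_matOpNorm_stdGauss_le (h₁ : 0 < n₁) (h₂ : 0 < n₂) :
    ∫ ω, matOpNorm (Matrix.of fun i j => ω (i, j)) ∂stdGauss (Fin n₁ × Fin n₂) ≤
      Real.sqrt n₁ + Real.sqrt n₂ := by
  have : Nonempty (Fin n₁) := ⟨⟨0, h₁⟩⟩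
  have : Nonempty (Fin n₂) := ⟨⟨0, h₂⟩⟩
  set N := ∫ ω, matOpNorm (Matrix.of fun i j => ω (i, j)) ∂stdGauss (Fin n₁ × Fin n₂)
  set K := (Fin n₁ × Fin n₂) ⊕ (Fin n₁ ⊕ Fin n₂)
  let G : (K → ℝ) → Matrix (Fin n₁) (Fin n₂) ℝ := fun ω => Matrix.of fun i j => ω (Sum.inl (i, j))
  have hmp := measurePreserving_comp_inl (Fin n₁ × Fin n₂) (Fin n₁ ⊕ Fin n₂)
  have hGi : Integrable (fun ω => ‖transposeCLM (G ω)‖) (stdGauss K) := by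
    simp_rw [← matOpNorm_eq_norm]
    exact hmp.integrable_comp_of_integrable integrable_matOpNorm_stdGauss
  have hNG : N = ∫ ω, ‖transposeCLM (G ω)‖ ∂stdGauss K := by
    have h := integral_map (μ := stdGauss K)
      (f := fun ω : Fin n₁ × Fin n₂ → ℝ => matOpNorm (Matrix.of fun i j => ω (i, j)))
      hmp.aemeasurable (by rw [hmp.map_eq]; exact integrable_matOpNorm_stdGauss.1)
    rw [hmp.map_eq] at h
    simp_rw [← matOpNorm_eq_norm]
    exact h
  obtain ⟨hgi, hg⟩ := integral_norm_coords_le h₁ (fun i => (Sum.inr (Sum.inl i) : K))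
  obtain ⟨hhi, hh⟩ := integral_norm_coords_le h₂ (fun j => (Sum.inr (Sum.inr j) : K))
  have hnet (ε : ℝ) (hε : 0 < ε) : ∃ C : ℝ, ∀ β : ℝ, 0 < β →
      N ≤ Real.sqrt n₁ + Real.sqrt n₂ + C / β + 2 * ε * N := by
    obtain ⟨s, hsf, hs1, hs⟩ := exists_finite_net_sphere n₁ hε
    obtain ⟨t, htf, ht1, ht⟩ := exists_finite_net_sphere n₂ hε
    have := hsf.fintype
    have := htf.fintype
    obtain ⟨u₀, hu₀⟩ := exists_norm_eq (EuclideanSpace ℝ (Fin n₁)) zero_le_one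
    obtain ⟨v₀, hv₀⟩ := exists_norm_eq (EuclideanSpace ℝ (Fin n₂)) zero_le_one
    obtain ⟨u₁, hu₁, -⟩ := hs u₀ hu₀
    obtain ⟨v₁, hv₁, -⟩ := ht v₀ hv₀
    have : Nonempty (s × t) := ⟨⟨u₁, hu₁⟩, ⟨v₁, hv₁⟩⟩
    refine ⟨Real.log (Fintype.card (s × t)), fun β hβ => ?_⟩
    let a : s × t → K → ℝ := fun p => bilinCoeff β (p.1, p.2)
    let b : s × t → K → ℝ := fun p => splitCoeff β (p.1, p.2)
    have hcomp : ∫ ω, logSumExp (linProc a ω) ∂stdGauss K ≤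
        ∫ ω, logSumExp (linProc b ω) ∂stdGauss K := by
      refine integral_logSumExp_linProc_le (fun p q => ?_) fun p q => ?_
      · simp [a, b, K, bilinCoeff, splitCoeff]
      · exact sum_bilinCoeff_sub_sq_le β (hs1 _ p.1.2) (ht1 _ p.2.2) (hs1 _ q.1.2) (ht1 _ q.2.2)
    have ha (ω : K → ℝ) (p : s × t) :
        linProc a ω p = β * inner ℝ p.2.1 (transposeCLM (G ω) p.1.1) := by
      simp only [linProc, a, K, bilinCoeff, Fintype.sum_sum_type, Sum.elim_inl, Sum.elim_inr,
        Pi.zero_apply, zero_mul, Finset.sum_const_zero, add_zero, transposeCLM_apply,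
        PiLp.inner_apply, Matrix.mulVec, dotProduct, Matrix.transpose_apply, G, Matrix.of_apply,
        Finset.mul_sum, Fintype.sum_prod_type_right, RCLike.inner_apply, conj_trivial,
        Finset.sum_mul]
      exact Finset.sum_congr rfl fun j _ => Finset.sum_congr rfl fun i _ => by ring
    have hlow (ω : K → ℝ) : (1 - 2 * ε) * ‖transposeCLM (G ω)‖ ≤ logSumExp (linProc a ω) / β := by
      have h := opNorm_le_of_net (transposeCLM (G ω)) (M := logSumExp (linProc a ω) / β) hs1 hs ht
        fun u hu v hv => by
          rw [le_div_iff₀' hβ, ← ha ω (⟨u, hu⟩, ⟨v, hv⟩)]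
          exact le_logSumExp _ _
      linarith
    have hupp (ω : K → ℝ) : logSumExp (linProc b ω) / β ≤
        ‖WithLp.toLp 2 (fun i => ω (Sum.inr (Sum.inl i)))‖ +
        ‖WithLp.toLp 2 (fun j => ω (Sum.inr (Sum.inr j)))‖ +
        Real.log (Fintype.card (s × t)) / β := by
      rw [div_le_iff₀ hβ, add_mul, div_mul_cancel₀ _ hβ.ne']
      refine logSumExp_le fun p => ?_
      have hb : linProc b ω p =
          (inner ℝ p.1.1 (WithLp.toLp 2 (fun i => ω (Sum.inr (Sum.inl i)))) +
            inner ℝ p.2.1 (WithLp.toLp 2 (fun j => ω (Sum.inr (Sum.inr j))))) * β := by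
        simp only [linProc, b, K, splitCoeff, Fintype.sum_sum_type, Sum.elim_inl, Sum.elim_inr,
          Pi.zero_apply, zero_mul, Finset.sum_const_zero, zero_add, PiLp.inner_apply,
          RCLike.inner_apply, conj_trivial, add_mul, Finset.sum_mul]
        congr 1 <;> exact Finset.sum_congr rfl fun i _ => by ring
      rw [hb]
      refine mul_le_mul_of_nonneg_right (add_le_add ?_ ?_) hβ.le
      · simpa [hs1 _ p.1.2] using real_inner_le_norm p.1.1 _
      · simpa [ht1 _ p.2.2] using real_inner_le_norm p.2.1 _
    have h1 : (1 - 2 * ε) * N ≤ (∫ ω, logSumExp (linProc a ω) ∂stdGauss K) / β := by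
      rw [hNG, ← integral_const_mul, ← integral_div]
      exact integral_mono (hGi.const_mul _) ((integrable_logSumExp_linProc a).div_const _) hlow
    have h2 : (∫ ω, logSumExp (linProc b ω) ∂stdGauss K) / β ≤
        Real.sqrt n₁ + Real.sqrt n₂ + Real.log (Fintype.card (s × t)) / β := by
      rw [← integral_div]
      have hghi : Integrable (fun ω : K → ℝ =>
          ‖WithLp.toLp 2 (fun i => ω (Sum.inr (Sum.inl i)))‖ +
          ‖WithLp.toLp 2 (fun j => ω (Sum.inr (Sum.inr j)))‖) (stdGauss K) := hgi.add hhi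
      refine (integral_mono ((integrable_logSumExp_linProc b).div_const _)
        (hghi.add (integrable_const _)) hupp).trans ?_
      rw [integral_add' hghi (integrable_const _), integral_add hgi hhi]
      simpa using add_le_add hg hh
    have h3 := div_le_div_of_nonneg_right hcomp hβ.le
    linarith
  have hlim (ε : ℝ) (hε : 0 < ε) : N ≤ Real.sqrt n₁ + Real.sqrt n₂ + 2 * ε * N := by
    obtain ⟨C, hC⟩ := hnet ε hε
    have htend : Filter.Tendsto (fun β : ℝ => Real.sqrt n₁ + Real.sqrt n₂ + C / β + 2 * ε * N)
        Filter.atTop (nhds (Real.sqrt n₁ + Real.sqrt n₂ + 0 + 2 * ε * N)) :=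
      ((tendsto_const_nhds.add (tendsto_const_nhds.div_atTop Filter.tendsto_id)).add_const _)
    rw [add_zero] at htend
    exact ge_of_tendsto htend ((Filter.eventually_gt_atTop 0).mono hC)
  have htend : Filter.Tendsto (fun ε : ℝ => Real.sqrt n₁ + Real.sqrt n₂ + 2 * ε * N)
      (nhdsWithin 0 (Set.Ioi 0)) (nhds (Real.sqrt n₁ + Real.sqrt n₂ + 2 * 0 * N)) :=
    (Continuous.tendsto (by fun_prop) 0).mono_left nhdsWithin_le_nhds
  rw [mul_zero, zero_mul, add_zero] at htend
  exact ge_of_tendsto htend (eventually_mem_nhdsWithin.mono hlim)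

end GaussianMatrix


/-- `sup {⟨G,X⟩ : ‖X‖_F = 1, ‖X‖_*² ≤ τ} ≤ √τ·‖G‖₂`, and for a standard
Gaussian matrix `G`, `E[sup ⟨G,X⟩] ≤ √τ·E‖G‖₂ ≤ 2√τ·√n₂`. -/
theorem stmt17 {n₁ n₂ : ℕ} (hn : n₁ ≤ n₂) (τ : ℝ) (hτ1 : 1 ≤ τ) (hτ2 : τ ≤ (n₁ : ℝ)) :
    (∀ G : Matrix (Fin n₁) (Fin n₂) ℝ,
      sSup {c | ∃ X : Matrix (Fin n₁) (Fin n₂) ℝ,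
          frobNorm X = 1 ∧ nuclearNorm X ^ 2 ≤ τ ∧ c = matInner G X} ≤
        Real.sqrt τ * matOpNorm G) ∧
    (∫ ω, sSup {c | ∃ X : Matrix (Fin n₁) (Fin n₂) ℝ,
          frobNorm X = 1 ∧ nuclearNorm X ^ 2 ≤ τ ∧
          c = matInner (Matrix.of fun i j => ω (i, j)) X}
        ∂(Measure.pi fun _ : Fin n₁ × Fin n₂ => gaussianReal 0 1)) ≤
      Real.sqrt τ * (∫ ω, matOpNorm (Matrix.of fun i j => ω (i, j))
        ∂(Measure.pi fun _ : Fin n₁ × Fin n₂ => gaussianReal 0 1)) ∧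
    Real.sqrt τ * (∫ ω, matOpNorm (Matrix.of fun i j => ω (i, j))
        ∂(Measure.pi fun _ : Fin n₁ × Fin n₂ => gaussianReal 0 1)) ≤
      2 * Real.sqrt τ * Real.sqrt n₂ := by
  have h₁ : 0 < n₁ := by
    have : (0 : ℝ) < n₁ := by linarith
    exact_mod_cast this
  refine ⟨sSup_matInner_le, ?_, ?_⟩
  · rw [← integral_const_mul]
    by_cases hint : Integrable (fun ω : Fin n₁ × Fin n₂ → ℝ =>
        sSup {c | ∃ X : Matrix (Fin n₁) (Fin n₂) ℝ, frobNorm X = 1 ∧ nuclearNorm X ^ 2 ≤ τ ∧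
          c = matInner (Matrix.of fun i j => ω (i, j)) X}) (stdGauss (Fin n₁ × Fin n₂))
    · exact integral_mono hint (integrable_matOpNorm_stdGauss.const_mul _)
        fun ω => sSup_matInner_le _
    · rw [integral_undef hint]
      exact integral_nonneg fun ω => mul_nonneg (Real.sqrt_nonneg _) (matOpNorm_nonneg _)
  · have h := integral_matOpNorm_stdGauss_le h₁ (h₁.trans_le hn)
    have hle : Real.sqrt n₁ ≤ Real.sqrt n₂ := Real.sqrt_le_sqrt (by exact_mod_cast hn)
    rw [mul_comm 2, mul_assoc]
    exact mul_le_mul_of_nonneg_left (by linarith) (Real.sqrt_nonneg τ)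

end
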